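/- arXiv:2301.11222 — 2 statements merged into one kernel-verified Lean document; each statement's English description precedes it below -/
import Mathlib

section
/- For every positive integer n, the following identity of rational numbers holds: 2 * Σ_{d=1}^{2n-2} Σ_{h=1}^{2n-1-d} Σ_{ℓ=h+1}^{2n-d} Σ_{i_1=ℓ+d+1}^{2n+1} Σ_{i_2=ℓ+d}^{i_1-1} (4n+1-i_1)(i_1-i_2+1)(i_2-ℓ-d+1) = (144n^8 + 992n^7 + 840n^6 - 1456n^5 - 1239n^4 + 518n^3 + 255n^2 - 54n)/1260. -/
/-!
The nested sum is evaluated from the inside out with the rising binomials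
`R k x = x (x + 1) ⋯ (x + k - 1) / k!`, whose discrete antiderivative is `R (k + 1)`, i.e.
`∑_{x = 1}^{y} R k x = R (k + 1) y`. Put `p = i₁ - ℓ - d`. The sum over `i₂` is
`∑_{t = 1}^{p} t (p - t + 2) = R 3 p + R 2 p`. With `q = 2n + 1 - ℓ - d`, the relation
`p R k p = (k + 1) R (k + 1) p - k R k p` turns the sum over `i₁` into
`R 5 q - R 3 q + 2n (R 4 q + R 3 q)`. Each of the three remaining sums runs over the argument
from `1` up to a new bound, so it only raises every index by one. The total is
`R 8 - R 6 + 2n (R 7 + R 6)` at `2n - 2`, and doubling it gives the stated polynomial.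
-/

/-- The rising binomial `x (x + 1) ⋯ (x + k - 1) / k!`, defined for every rational `x`. -/
def risingBinom : ℕ → ℚ → ℚ
  | 0, _ => 1
  | k + 1, x => risingBinom k x * (x + k) / (k + 1)

/-- Telescoping over an integer interval; `a ≤ b + 1` allows the empty interval only in the
boundary case `a = b + 1`, where both sides vanish. -/
lemma sum_Icc_telescope (f F : ℤ → ℚ) (a b : ℤ) (hab : a ≤ b + 1)
    (h : ∀ x, F x - F (x - 1) = f x) :
    ∑ x ∈ Finset.Icc a b, f x = F b - F (a - 1) := by
  obtain ⟨m, hm⟩ : ∃ m : ℕ, b = a - 1 + m := ⟨(b + 1 - a).toNat, by omega⟩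
  subst hm
  clear hab
  induction m with
  | zero => simp
  | succ m ih =>
    have hI : Finset.Icc a (a - 1 + ((m + 1 : ℕ) : ℤ))
        = insert (a + m) (Finset.Icc a (a - 1 + (m : ℤ))) := by
      ext x
      simp only [Finset.mem_Icc, Finset.mem_insert]
      omega
    rw [hI, Finset.sum_insert (by simp only [Finset.mem_Icc]; omega), ih, ← h (a + m)]
    have e1 : a + (m : ℤ) - 1 = a - 1 + m := by ring
    have e2 : a - 1 + ((m + 1 : ℕ) : ℤ) = a + m := by push_cast; ring
    rw [e1, e2]
    ring

lemma sum_i2 (n : ℕ) (i m : ℤ) (hi : m + 1 ≤ i) (l d : ℤ) (hm : m = l + d) :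
    ∑ j ∈ Finset.Icc (l + d) (i - 1), (((4*n+1-i)*(i-j+1)*(j-l-d+1) : ℤ) : ℚ)
      = (4*n+1-i) * (risingBinom 3 (i - m) + risingBinom 2 (i - m)) := by
  subst hm
  rw [sum_Icc_telescope _ (fun x => (4*(n:ℚ)+1-i) * (((i:ℚ) - l - d + 3)
      * risingBinom 2 (x - l - d + 1) - 2 * risingBinom 3 (x - l - d + 1))) _ _ (by omega)]
  · simp only [risingBinom]
    push_cast
    ring
  · intro x
    simp only [risingBinom]
    push_cast
    ring

lemma sum_i1 (n : ℕ) (l d : ℤ) (hm : l + d ≤ 2 * n) :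
    ∑ i ∈ Finset.Icc (l + d + 1) (2*n+1), ∑ j ∈ Finset.Icc (l + d) (i - 1),
        (((4*n+1-i)*(i-j+1)*(j-l-d+1) : ℤ) : ℚ)
      = risingBinom 5 (2*n+1-l-d) - risingBinom 3 (2*n+1-l-d)
        + 2*n*(risingBinom 4 (2*n+1-l-d) + risingBinom 3 (2*n+1-l-d)) := by
  rw [Finset.sum_congr rfl fun i hi =>
    sum_i2 n i (l + d) (Finset.mem_Icc.mp hi).1 l d rfl]
  rw [sum_Icc_telescope _ (fun x => (4*(n:ℚ)+1-l-d)
      * (risingBinom 4 (x - l - d) + risingBinom 3 (x - l - d))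
      - 4 * risingBinom 5 (x - l - d) + 2 * risingBinom 3 (x - l - d)) _ _ (by omega)]
  · simp only [risingBinom]
    push_cast
    ring
  · intro x
    simp only [risingBinom]
    push_cast
    ring

lemma risingBinom_zero (k : ℕ) : risingBinom (k + 1) 0 = 0 := by
  induction k with
  | zero => simp [risingBinom]
  | succ k ih => rw [risingBinom, ih]; simp

/-- Pascal's rule, which makes `risingBinom (k + 1)` a discrete antiderivative of
`risingBinom k`. -/
lemma risingBinom_sub (k : ℕ) (x : ℚ) :
    risingBinom (k + 1) x - risingBinom (k + 1) (x - 1) = risingBinom k x := by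
  -- The shift `(x - 1) R k x = (x + k - 1) R k (x - 1)` compares the two values factor by factor.
  have shift : ∀ k : ℕ, (x - 1) * risingBinom k x = (x + k - 1) * risingBinom k (x - 1) := by
    intro k
    induction k with
    | zero => simp [risingBinom]
    | succ k ih =>
      simp only [risingBinom]
      push_cast
      linear_combination (x + k) / (k + 1) * ih
  have hk : (k : ℚ) + 1 ≠ 0 := by positivity
  simp only [risingBinom]
  field_simp
  linear_combination shift k

/-- The combination of rising binomials that each of the three outer sums reproduces with
`k` replaced by `k + 1`. -/
def profile (n : ℕ) (k : ℕ) (x : ℚ) : ℚ :=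
  risingBinom (k + 3) x - risingBinom (k + 1) x
    + 2 * n * (risingBinom (k + 2) x + risingBinom (k + 1) x)

lemma profile_sub (n k : ℕ) (x : ℚ) :
    profile n (k + 1) x - profile n (k + 1) (x - 1) = profile n k x := by
  have h1 := risingBinom_sub (k + 1) x
  have h2 := risingBinom_sub (k + 2) x
  have h3 := risingBinom_sub (k + 3) x
  simp only [profile, show k + 1 + 3 = k + 3 + 1 by ring, show k + 1 + 2 = k + 2 + 1 by ring]
  linear_combination h3 - h1 + 2 * n * (h2 + h1)

lemma profile_zero (n k : ℕ) : profile n k 0 = 0 := by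
  simp [profile, risingBinom_zero]

/-- Here the argument `c - x` decreases from `c - a` down to `1`. -/
lemma sum_profile (n k : ℕ) (a b c : ℤ) (hab : a ≤ b + 1) (hc : c = b + 1) :
    ∑ x ∈ Finset.Icc a b, profile n k ((c - x : ℤ) : ℚ)
      = profile n (k + 1) ((c - a : ℤ) : ℚ) := by
  rw [sum_Icc_telescope _ (fun x => - profile n (k + 1) ((c - x - 1 : ℤ) : ℚ)) a b hab]
  · have e1 : c - b - 1 = 0 := by omega
    have e2 : c - (a - 1) - 1 = c - a := by ring
    simp only [e1, e2, Int.cast_zero, profile_zero]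
    ring
  · intro x
    have e : c - (x - 1) - 1 = c - x := by ring
    have := profile_sub n k ((c - x : ℤ) : ℚ)
    simp only [e]
    push_cast at this ⊢
    linear_combination this

theorem stmt14 (n : ℕ) (hn : 1 ≤ n) :
    2 * ∑ d ∈ Finset.Icc (1:ℤ) (2*n-2), ∑ h ∈ Finset.Icc (1:ℤ) (2*n-1-d),
        ∑ ℓ ∈ Finset.Icc (h+1) (2*n-d),
          ∑ i1 ∈ Finset.Icc (ℓ+d+1) (2*n+1), ∑ i2 ∈ Finset.Icc (ℓ+d) (i1-1),
            (((4*n+1-i1)*(i1-i2+1)*(i2-ℓ-d+1) : ℤ) : ℚ)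
      = (144*(n:ℚ)^8 + 992*(n:ℚ)^7 + 840*(n:ℚ)^6 - 1456*(n:ℚ)^5 - 1239*(n:ℚ)^4
          + 518*(n:ℚ)^3 + 255*(n:ℚ)^2 - 54*(n:ℚ))/1260 := by
  have key : ∀ d ∈ Finset.Icc (1:ℤ) (2*n-2), ∑ h ∈ Finset.Icc (1:ℤ) (2*n-1-d),
        ∑ ℓ ∈ Finset.Icc (h+1) (2*n-d),
          ∑ i1 ∈ Finset.Icc (ℓ+d+1) (2*n+1), ∑ i2 ∈ Finset.Icc (ℓ+d) (i1-1),
            (((4*n+1-i1)*(i1-i2+1)*(i2-ℓ-d+1) : ℤ) : ℚ)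
      = profile n 4 ((2*n-1-d : ℤ) : ℚ) := by
    intro d hd
    rw [Finset.mem_Icc] at hd
    have inner : ∀ h ∈ Finset.Icc (1:ℤ) (2*n-1-d), ∑ ℓ ∈ Finset.Icc (h+1) (2*n-d),
          ∑ i1 ∈ Finset.Icc (ℓ+d+1) (2*n+1), ∑ i2 ∈ Finset.Icc (ℓ+d) (i1-1),
            (((4*n+1-i1)*(i1-i2+1)*(i2-ℓ-d+1) : ℤ) : ℚ)
        = profile n 3 ((2*n-d-h : ℤ) : ℚ) := by
      intro h hh
      rw [Finset.mem_Icc] at hh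
      have e : (2*n-d-h : ℤ) = (2*n-d+1) - (h+1) := by ring
      rw [e, ← sum_profile n 2 (h+1) (2*n-d) (2*n-d+1) (by omega) rfl]
      refine Finset.sum_congr rfl fun l hl => ?_
      rw [Finset.mem_Icc] at hl
      rw [sum_i1 n l d (by omega)]
      have e' : ((2*n-d+1-l : ℤ) : ℚ) = 2*n+1-l-d := by push_cast; ring
      rw [e', profile]
    have e : (2*n-1-d : ℤ) = (2*n-d) - 1 := by ring
    rw [Finset.sum_congr rfl inner, sum_profile n 3 1 _ (2*n-d) (by omega) (by ring), e]
  rw [Finset.sum_congr rfl key, sum_profile n 4 1 _ (2*n-1) (by omega) (by ring)]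
  simp only [profile, risingBinom]
  push_cast
  ring
end

section
/- For every positive integer n, the following identity of rational numbers holds: 2 * Σ_{d=1}^{⌊(2n-1)/2⌋} Σ_{h=1}^{2n-2d} Σ_{ℓ=1+d+h}^{2n+1-d} Σ_{i_1=ℓ+d}^{2n+1} Σ_{l_1=1}^{ℓ-d-h} (4n+1-i_1)(i_1-ℓ-d+1)(ℓ-d-h-l_1+1) = (72n^8 + 368n^7 + 448n^6 - 322n^5 - 707n^4 - 28n^3 + 187n^2 - 18n)/1260. -/
/-!
Put `m = 2n + 2 - ℓ - d` and `r = ℓ - d - h`, so that `r + m = R + 1` with `R = 2n + 1 - 2d - h`.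
The two innermost sums are independent of each other and equal
`∑ i₁, (4n+1-i₁)(i₁-ℓ-d+1) = C(m+1,3) + 2n C(m+1,2)` and `∑ l₁, (ℓ-d-h-l₁+1) = C(r+1,2)`.
The sum over `ℓ` is then a Vandermonde convolution, equal to `C(R+4,6) + 2n C(R+4,5)`, and the
sum over `h` is a hockey-stick sum, equal to `C(T+5,7) + 2n C(T+5,6)` with `T = 2(n-d)`.
What remains is the sum of a polynomial over even arguments `T`.

Every one of these evaluations is obtained by telescoping (`sum_Icc_eq_sub`): an explicit polynomial
antiderivative is exhibited, and its backward difference is checked by `ring`.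
-/

/-- The binomial coefficient `C(x, k) = x (x-1) ⋯ (x-k+1) / k!` as a polynomial in `x : ℚ`. -/
def binom : ℕ → ℚ → ℚ
  | 0, _ => 1
  | k + 1, x => binom k x * (x - k) / (k + 1)

/-- Telescoping over an integer interval. The hypothesis `a ≤ b + 1` admits the empty interval
`b = a - 1`, for which both sides vanish. -/
lemma sum_Icc_eq_sub (f F : ℤ → ℚ) (hF : ∀ x, F x - F (x - 1) = f x) {a b : ℤ} (hab : a ≤ b + 1) :
    ∑ x ∈ Finset.Icc a b, f x = F b - F (a - 1) := by
  obtain ⟨k, hk⟩ := Int.le.dest hab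
  obtain rfl : b = a + k - 1 := by omega
  clear hk hab
  induction k with
  | zero => simp
  | succ k ih =>
    have h : Finset.Icc a (a + ((k + 1 : ℕ) : ℤ) - 1)
        = insert (a + (k : ℤ)) (Finset.Icc a (a + k - 1)) := by
      ext x; simp only [Finset.mem_Icc, Finset.mem_insert]; omega
    rw [h, Finset.sum_insert (by simp), ih, ← hF]
    push_cast
    ring_nf

/-- The common shape `C(x, k+1) + 2n C(x, k)` of the sums over `i₁`, `ℓ` and `h`. -/
def mix (n : ℚ) (k : ℕ) (x : ℚ) : ℚ := binom (k + 1) x + 2 * n * binom k x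

lemma sum_i (n d ℓ : ℤ) (h : ℓ + d ≤ 2 * n + 2) :
    ∑ i ∈ Finset.Icc (ℓ + d) (2 * n + 1), (((4 * n + 1 - i) * (i - ℓ - d + 1) : ℤ) : ℚ)
      = mix n 2 (2 * n + 3 - ℓ - d) := by
  -- With `k = i - ℓ - d + 1` the summand is `(4n + 2 - ℓ - d) k - k²`.
  rw [sum_Icc_eq_sub _ (fun i : ℤ => (4 * n + 2 - ℓ - d : ℚ) * ((i - ℓ - d + 1) * (i - ℓ - d + 2) / 2)
    - (i - ℓ - d + 1) * (i - ℓ - d + 2) * (2 * (i - ℓ - d) + 3) / 6) _ (by omega)]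
  · simp only [mix, binom]; push_cast; ring
  · intro i; push_cast; ring

lemma sum_l (r : ℤ) (h : 0 ≤ r) :
    ∑ l ∈ Finset.Icc 1 r, ((r - l + 1 : ℤ) : ℚ) = binom 2 (r + 1) := by
  rw [sum_Icc_eq_sub _ (fun l : ℤ => -((r - l : ℚ) * (r - l + 1) / 2)) _ (by omega)]
  · simp only [binom]; push_cast; ring
  · intro l; push_cast; ring

/-- The convolution of `C(r+1, 2)` with `mix n 2`, where `r = ℓ - d - h`. The antiderivative comes
from summing by parts twice. -/
lemma sum_ℓ (n d h : ℤ) (hh : h ≤ 2 * n - 2 * d) :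
    ∑ ℓ ∈ Finset.Icc (1 + d + h) (2 * n + 1 - d),
        mix n 2 (2 * n + 3 - ℓ - d) * binom 2 (ℓ - d - h + 1)
      = mix n 5 (2 * n + 5 - 2 * d - h) := by
  rw [sum_Icc_eq_sub _ (fun ℓ : ℤ => -(binom 2 (ℓ - d - h + 2) * mix n 3 (2 * n + 3 - ℓ - d)
    + (ℓ - d - h + 2) * mix n 4 (2 * n + 3 - ℓ - d) + mix n 5 (2 * n + 3 - ℓ - d))) _ (by omega)]
  · simp only [mix, binom]; push_cast; ring
  · intro ℓ; simp only [mix, binom]; push_cast; ring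

lemma sum_h (n d : ℤ) (hd : d ≤ n) :
    ∑ h ∈ Finset.Icc 1 (2 * n - 2 * d), mix n 5 (2 * n + 5 - 2 * d - h)
      = mix n 6 (2 * n + 5 - 2 * d) := by
  rw [sum_Icc_eq_sub _ (fun h : ℤ => -mix n 6 (2 * n + 5 - 2 * d - h)) _ (by omega)]
  · simp only [mix, binom]; push_cast; ring
  · intro h; simp only [mix, binom]; push_cast; ring

/-- The polynomial with `evenSum7 e = ∑_{j=1}^e C(2j+5, 7)`. -/
def evenSum7 (e : ℚ) : ℚ :=
  (8 * e ^ 8 + 96 * e ^ 7 + 448 * e ^ 6 + 1008 * e ^ 5 + 1057 * e ^ 4 + 294 * e ^ 3 - 253 * e ^ 2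
    - 138 * e) / 2520

/-- The polynomial with `evenSum6 e = ∑_{j=1}^e C(2j+5, 6)`. -/
def evenSum6 (e : ℚ) : ℚ :=
  (32 * e ^ 7 + 392 * e ^ 6 + 1904 * e ^ 5 + 4655 * e ^ 4 + 5978 * e ^ 3 + 3773 * e ^ 2
    + 906 * e) / 2520

lemma sum_d (n : ℤ) (hn : 1 ≤ n) :
    ∑ d ∈ Finset.Icc 1 (n - 1), mix n 6 (2 * n + 5 - 2 * d)
      = evenSum7 (n - 1) + 2 * n * evenSum6 (n - 1) := by
  rw [sum_Icc_eq_sub _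
    (fun d : ℤ => -(evenSum7 (n - d - 1) + 2 * n * evenSum6 (n - d - 1))) _ (by omega)]
  · simp only [evenSum7, evenSum6]; push_cast; ring
  · intro d; simp only [mix, binom, evenSum7, evenSum6]; push_cast; ring

theorem stmt18 (n : ℕ) (hn : 1 ≤ n) :
    2 * ∑ d ∈ Finset.Icc (1:ℤ) (((2*n-1)/2 : ℕ) : ℤ), ∑ h ∈ Finset.Icc (1:ℤ) (2*n-2*d),
        ∑ ℓ ∈ Finset.Icc (1+d+h) (2*n+1-d),
          ∑ i1 ∈ Finset.Icc (ℓ+d) (2*n+1), ∑ l1 ∈ Finset.Icc (1:ℤ) (ℓ-d-h),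
            (((4*n+1-i1)*(i1-ℓ-d+1)*(ℓ-d-h-l1+1) : ℤ) : ℚ)
      = (72*(n:ℚ)^8 + 368*(n:ℚ)^7 + 448*(n:ℚ)^6 - 322*(n:ℚ)^5 - 707*(n:ℚ)^4
          - 28*(n:ℚ)^3 + 187*(n:ℚ)^2 - 18*(n:ℚ))/1260 := by
  have hfloor : (((2*n-1)/2 : ℕ) : ℤ) = (n : ℤ) - 1 := by omega
  rw [hfloor]
  have key : ∀ d ∈ Finset.Icc (1:ℤ) ((n : ℤ) - 1), (∑ h ∈ Finset.Icc (1:ℤ) (2*n-2*d),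
        ∑ ℓ ∈ Finset.Icc (1+d+h) (2*n+1-d),
          ∑ i1 ∈ Finset.Icc (ℓ+d) (2*n+1), ∑ l1 ∈ Finset.Icc (1:ℤ) (ℓ-d-h),
            (((4*n+1-i1)*(i1-ℓ-d+1)*(ℓ-d-h-l1+1) : ℤ) : ℚ))
      = mix (n : ℤ) 6 (2 * (n : ℤ) + 5 - 2 * d) := by
    intro d hd
    rw [Finset.mem_Icc] at hd
    rw [← sum_h n d (by omega)]
    refine Finset.sum_congr rfl fun h hh => ?_
    rw [Finset.mem_Icc] at hh
    rw [← sum_ℓ n d h hh.2]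
    refine Finset.sum_congr rfl fun ℓ hℓ => ?_
    rw [Finset.mem_Icc] at hℓ
    have hr : ((ℓ : ℚ) - d - h + 1) = ((ℓ - d - h : ℤ) : ℚ) + 1 := by push_cast; ring
    rw [hr, ← sum_i n d ℓ (by omega), ← sum_l (ℓ - d - h) (by omega), Finset.sum_mul_sum]
    simp only [Int.cast_mul]
  rw [Finset.sum_congr rfl key, sum_d n (by omega)]
  simp only [evenSum7, evenSum6]
  push_cast
  ring
end
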